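/- Let X ⊆ A^n_k be an arrangement of linear subspaces with intersection poset P(X), and let I be an ideal defining X. For an injective R-module E, the augmented Roos complex Roos_*(H^0_{[*]}(E)) → H^0_I(E) → 0 is exact, where H^0_{[*]}(E) is the diagram p ↦ Γ_{I_p}(E) over P(X). -/

import Mathlib

/-- Chains of `m` elements of a preorder `P`: strictly increasing `m`-tuples. These are the
`(m-1)`-simplices of the order complex `K(P)`; for `m = 0` there is exactly one (empty) chain. -/
@[reducible] def pchains (P : Type*) [Preorder P] (m : ℕ) : Type _ :=
  {f : Fin m → P // StrictMono f}

/-- The boundary map of the augmented simplicial chain complex of the order complex of `P`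
with coefficients in `M`: the alternating sum over deletions of a vertex.  In degree `0`
this is the augmentation onto `pchains P 0 →₀ M ≃ M`. -/
noncomputable def simpBdry (A : Type*) [CommRing A] (M : Type*) [AddCommGroup M] [Module A M]
    (P : Type*) [Preorder P] (m : ℕ) :
    (pchains P (m + 1) →₀ M) →ₗ[A] (pchains P m →₀ M) :=
  Finsupp.lsum ℕ fun c =>
    ∑ i : Fin (m + 1), ((-1 : A) ^ (i : ℕ)) •
      (Finsupp.lsingle (⟨c.1 ∘ i.succAbove, c.2.comp (Fin.strictMono_succAbove i)⟩ : pchains P m))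

/-- Cycles of the augmented simplicial chain complex (everything in lowest degree). -/
noncomputable def simpCycles (A : Type*) [CommRing A] (M : Type*) [AddCommGroup M] [Module A M]
    (P : Type*) [Preorder P] : (m : ℕ) → Submodule A (pchains P m →₀ M)
  | 0 => ⊤
  | (m + 1) => LinearMap.ker (simpBdry A M P m)

/-- `simpHomology A M P m` is the reduced simplicial homology `H̃_{m-1}(K(P); M)` of the order
complex of `P` with coefficients in the `A`-module `M`, computed from the augmented chain
complex; with this convention `H̃_{-1}(∅; M) = M` (the case `m = 0`, `P = ∅`). -/
@[reducible] noncomputable def simpHomology (A : Type*) [CommRing A] (M : Type*) [AddCommGroup M] [Module A M]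
    (P : Type*) [Preorder P] (m : ℕ) : Type _ :=
  ↥(simpCycles A M P m) ⧸
    (Submodule.comap (simpCycles A M P m).subtype (LinearMap.range (simpBdry A M P m)))

/-- The `J`-torsion submodule `Γ_J(M) = H^0_J(M)`. -/
noncomputable def gammaTorsion {R : Type*} [CommRing R] (J : Ideal R) (M : Type*)
    [AddCommGroup M] [Module R M] : Submodule R M :=
  ⨆ r : ℕ, Submodule.torsionBySet R M ((J ^ r : Ideal R) : Set R)

/-- Degree-`m` part of the Roos complex of the diagram `H⁰_{[*]}(E) : p ↦ Γ_{I_p}(E)` over the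
intersection poset, realized inside `(chains) →₀ E`: the direct sum, over the chains
`p₀ < … < p_m`, of `Γ_{I_{p₀}}(E)`. (The transition maps of the diagram are the inclusions
`Γ_{I_p}(E) ⊆ Γ_{I_q}(E)` for `p ≤ q`, so the Roos differential is induced by the full
alternating sum of face maps `simpBdry`.) -/
noncomputable def roosGamma {n : ℕ} (k : Type) [Field k] {P : Type} [Preorder P]
    (ι : P → Ideal (MvPolynomial (Fin n) k)) (E : Type) [AddCommGroup E]
    [Module (MvPolynomial (Fin n) k) E] (m : ℕ) :
    Submodule (MvPolynomial (Fin n) k) (pchains P (m + 1) →₀ E) :=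
  ⨅ c : pchains P (m + 1),
    (gammaTorsion (ι (c.1 0)) E).comap (Finsupp.lapply c)


/-- The augmentation `Roos₀(H⁰_{[*]}(E)) → E`, summing the components. -/
noncomputable def gammaAug (n : ℕ) (k : Type) [Field k] (P : Type) [Preorder P]
    (E : Type) [AddCommGroup E] [Module (MvPolynomial (Fin n) k) E] :
    (pchains P 1 →₀ E) →ₗ[MvPolynomial (Fin n) k] E :=
  Finsupp.lsum ℕ fun _ => LinearMap.id

/-!
Over a Noetherian ring, injectivity of `E` makes `J ↦ Γ_J(E)` turn intersections of ideals into sums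
and sums of ideals into intersections, and `Γ_J(E)` depends only on the radical of `J`. For a lower
set `U` of `P` and `p ∉ U` this gives
`Γ_{I_p} ∩ ∑_{q ∈ U} Γ_{I_q} = ∑_{q ∈ U} Γ_{I_p + I_q} ⊆ ∑_{r < p} Γ_{I_r}`,
because a proper ideal `I_p + I_q` is `I_r` for some `r ≤ p, q`. A diagram of submodules with this
separation property has an exact Roos complex: remove the maximal elements of `P` one at a time,
using that the chains with last vertex `p` form a cone over the chains below `p`.
-/

section Torsion

variable {R E ι : Type*} [CommRing R] [AddCommGroup E] [Module R E]

/- If `A ⊓ B` kills `e`, then `a + b ↦ b • e` is well defined on `A ⊔ B`; an extension of it to `R`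
maps `1` to an element killed by `A` that differs from `e` by an element killed by `B`. -/
theorem torsionBySet_inf_le_sup (hE : Module.Baer R E) (A B : Ideal R) :
    Submodule.torsionBySet R E ↑(A ⊓ B) ≤
      Submodule.torsionBySet R E A ⊔ Submodule.torsionBySet R E B := by
  intro e he
  let zeroOnA : R →ₗ.[R] E := ⟨A, 0⟩
  let smulOnB : R →ₗ.[R] E := ⟨B, (LinearMap.toSpanSingleton R E e).domRestrict B⟩
  have hagree (a : A) (b : B) (hab : (a : R) = b) : zeroOnA a = smulOnB b :=
    ((Submodule.mem_torsionBySet_iff _ _).1 he ⟨b, hab ▸ a.2, b.2⟩).symm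
  obtain ⟨φ, hφ⟩ := hE (A ⊔ B) (zeroOnA.sup smulOnB hagree).toFun
  have hφ_smul (r : R) : φ r = r • φ 1 := by rw [← map_smul, smul_eq_mul, mul_one]
  have hφA : φ 1 ∈ Submodule.torsionBySet R E A := by
    refine (Submodule.mem_torsionBySet_iff _ _).2 fun a => ?_
    rw [← hφ_smul, hφ a (Ideal.mem_sup_left a.2)]
    exact ((zeroOnA.left_le_sup smulOnB hagree).2 (x := a) rfl).symm
  have hφB : e - φ 1 ∈ Submodule.torsionBySet R E B := by
    refine (Submodule.mem_torsionBySet_iff _ _).2 fun b => ?_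
    rw [smul_sub, ← hφ_smul, hφ b (Ideal.mem_sup_right b.2), sub_eq_zero]
    exact (zeroOnA.right_le_sup smulOnB hagree).2 (x := b) rfl
  exact Submodule.mem_sup.2 ⟨φ 1, hφA, e - φ 1, hφB, add_sub_cancel _ _⟩

theorem mem_gammaTorsion_iff {J : Ideal R} {e : E} :
    e ∈ gammaTorsion J E ↔ ∃ r : ℕ, e ∈ Submodule.torsionBySet R E ↑(J ^ r) :=
  Submodule.mem_iSup_of_directed _ <| Monotone.directed_le fun _ _ hrs =>
    Submodule.torsionBySet_le_torsionBySet_pow _ _ hrs J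

theorem gammaTorsion_le_of_le_radical {J K : Ideal R} (hJ : J.FG) (h : J ≤ K.radical) :
    gammaTorsion K E ≤ gammaTorsion J E := by
  intro e he
  obtain ⟨r, hr⟩ := mem_gammaTorsion_iff.1 he
  obtain ⟨s, hs⟩ := Ideal.exists_pow_le_of_le_radical_of_fg h hJ
  refine mem_gammaTorsion_iff.2 ⟨s * r, Submodule.torsionBySet_le_torsionBySet_of_subset ?_ hr⟩
  rw [pow_mul]
  exact Ideal.pow_right_mono hs r

theorem gammaTorsion_antitone : Antitone fun J : Ideal R => gammaTorsion J E :=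
  fun _ _ h => iSup_mono fun r =>
    Submodule.torsionBySet_le_torsionBySet_of_subset (Ideal.pow_right_mono h r)

theorem gammaTorsion_top : gammaTorsion (⊤ : Ideal R) E = ⊥ := by
  simp only [gammaTorsion, Ideal.top_pow, Submodule.top_coe, Submodule.torsionBySet_univ,
    iSup_const]

theorem gammaTorsion_sup (J K : Ideal R) :
    gammaTorsion (J ⊔ K) E = gammaTorsion J E ⊓ gammaTorsion K E := by
  refine le_antisymm (le_inf (gammaTorsion_antitone le_sup_left)
    (gammaTorsion_antitone le_sup_right)) ?_
  rintro e ⟨heJ, heK⟩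
  obtain ⟨r, hr⟩ := mem_gammaTorsion_iff.1 heJ
  obtain ⟨s, hs⟩ := mem_gammaTorsion_iff.1 heK
  refine mem_gammaTorsion_iff.2 ⟨r + s,
    Submodule.torsionBySet_le_torsionBySet_of_subset Ideal.sup_pow_add_le_pow_sup_pow ?_⟩
  rw [Submodule.mem_torsionBySet_iff] at hr hs ⊢
  rintro ⟨_, hx⟩
  obtain ⟨a, ha, b, hb, rfl⟩ := Submodule.mem_sup.1 hx
  simp only [add_smul, hr ⟨a, ha⟩, hs ⟨b, hb⟩, add_zero]

theorem finset_inf_sup_le_radical (T : Finset ι) (J : ι → Ideal R) (K : Ideal R) :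
    (T.inf fun q => K ⊔ J q) ≤ (K ⊔ T.inf J).radical := by
  rw [Ideal.radical_eq_sInf]
  refine le_sInf ?_
  rintro 𝔭 ⟨hle, hprime⟩
  obtain ⟨q, hq, hJq⟩ := hprime.inf_le'.1 (le_sup_right.trans hle)
  exact (Finset.inf_le hq).trans (sup_le (le_sup_left.trans hle) hJq)

variable [IsNoetherianRing R]

theorem exists_pow_inf_pow_le_inf_pow (I J : Ideal R) (r : ℕ) :
    ∃ s, I ^ s ⊓ J ^ r ≤ (I ⊓ J) ^ r := by
  obtain ⟨c, hc⟩ := Ideal.exists_pow_inf_eq_pow_smul I (J ^ r : Ideal R)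
  refine ⟨c + r, ?_⟩
  calc I ^ (c + r) ⊓ J ^ r
      = I ^ (c + r) • (⊤ : Ideal R) ⊓ J ^ r := by rw [smul_eq_mul, Ideal.mul_top]
    _ = I ^ r * (I ^ c • ⊤ ⊓ J ^ r) := by
      rw [hc (c + r) (Nat.le_add_right c r), Nat.add_sub_cancel_left, smul_eq_mul]
    _ ≤ I ^ r * J ^ r := Ideal.mul_mono_right inf_le_right
    _ = (I * J) ^ r := (mul_pow _ _ _).symm
    _ ≤ (I ⊓ J) ^ r := Ideal.pow_right_mono Ideal.mul_le_inf r

theorem gammaTorsion_inf (hE : Module.Baer R E) (I J : Ideal R) :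
    gammaTorsion (I ⊓ J) E = gammaTorsion I E ⊔ gammaTorsion J E := by
  refine le_antisymm ?_ (sup_le (gammaTorsion_antitone inf_le_left)
    (gammaTorsion_antitone inf_le_right))
  intro e he
  obtain ⟨r, hr⟩ := mem_gammaTorsion_iff.1 he
  obtain ⟨s, hs⟩ := exists_pow_inf_pow_le_inf_pow I J r
  have he_sup := torsionBySet_inf_le_sup hE (I ^ s) (J ^ r)
    (Submodule.torsionBySet_le_torsionBySet_of_subset hs hr)
  exact sup_le_sup (le_iSup (fun t : ℕ => Submodule.torsionBySet R E ↑(I ^ t)) s)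
    (le_iSup (fun t : ℕ => Submodule.torsionBySet R E ↑(J ^ t)) r) he_sup

theorem gammaTorsion_finset_inf (hE : Module.Baer R E) (T : Finset ι) (J : ι → Ideal R) :
    gammaTorsion (T.inf J) E = ⨆ q ∈ T, gammaTorsion (J q) E := by
  classical
  induction T using Finset.induction_on with
  | empty => simp [gammaTorsion_top]
  | insert a s _ ih => rw [Finset.inf_insert, Finset.iSup_insert, gammaTorsion_inf hE, ih]

theorem gammaTorsion_eq_iSup_of_radical_eq [Finite ι] (hE : Module.Baer R E) {J : ι → Ideal R}
    {I : Ideal R} (hI : I.radical = (⨅ q, J q).radical) :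
    gammaTorsion I E = ⨆ q, gammaTorsion (J q) E := by
  have := Fintype.ofFinite ι
  calc gammaTorsion I E = gammaTorsion (⨅ q, J q) E :=
        le_antisymm (gammaTorsion_le_of_le_radical (IsNoetherian.noetherian _)
            (Ideal.le_radical.trans hI.ge))
          (gammaTorsion_le_of_le_radical (IsNoetherian.noetherian _) (Ideal.le_radical.trans hI.le))
    _ = ⨆ q, gammaTorsion (J q) E := by
      simpa only [Finset.inf_univ_eq_iInf, Finset.mem_univ, iSup_pos] using
        gammaTorsion_finset_inf hE Finset.univ J

theorem gammaTorsion_inf_iSup_le (hE : Module.Baer R E) (T : Finset ι) (J : ι → Ideal R)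
    (K : Ideal R) :
    gammaTorsion K E ⊓ ⨆ q ∈ T, gammaTorsion (J q) E ≤ ⨆ q ∈ T, gammaTorsion (K ⊔ J q) E := by
  rw [← gammaTorsion_finset_inf hE, ← gammaTorsion_finset_inf hE, ← gammaTorsion_sup]
  exact gammaTorsion_le_of_le_radical (IsNoetherian.noetherian _)
    (finset_inf_sup_le_radical T J K)

theorem gammaTorsion_inf_iSup_le_iSup_Iio {P : Type*} [PartialOrder P] [Finite P]
    (hE : Module.Baer R E) {ι : P → Ideal R} (horder : ∀ p q, p ≤ q ↔ ι q ≤ ι p)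
    (hclosed : ∀ p q, ι p ⊔ ι q ≠ ⊤ → ∃ r, ι r = ι p ⊔ ι q) {p : P} {U : Set P}
    (hU : IsLowerSet U) (hp : p ∉ U) :
    gammaTorsion (ι p) E ⊓ ⨆ q ∈ U, gammaTorsion (ι q) E ≤
      ⨆ q ∈ Set.Iio p, gammaTorsion (ι q) E := by
  have hdistrib := gammaTorsion_inf_iSup_le hE U.toFinite.toFinset ι (ι p)
  simp only [Set.Finite.mem_toFinset] at hdistrib
  refine hdistrib.trans (iSup₂_le fun q hq => ?_)
  by_cases htop : ι p ⊔ ι q = ⊤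
  · rw [htop, gammaTorsion_top]
    exact bot_le
  obtain ⟨r, hr⟩ := hclosed p q htop
  have hrp : r ≤ p := (horder r p).2 (hr ▸ le_sup_left)
  have hrq : r ≤ q := (horder r q).2 (hr ▸ le_sup_right)
  have hr_ne : r ≠ p := fun h => hp (h ▸ hU hrq hq)
  rw [← hr]
  exact le_iSup₂_of_le r (hrp.lt_of_ne hr_ne) le_rfl

end Torsion

section Chains

variable {A M P : Type*} [CommRing A] [AddCommGroup M] [Module A M]

namespace pchains

instance [Preorder P] : Unique (pchains P 0) where
  default := ⟨Fin.elim0, fun i => i.elim0⟩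
  uniq _ := Subtype.ext (Subsingleton.elim _ _)

/-- The face of a chain opposite to its `i`-th vertex. -/
def face [Preorder P] {m : ℕ} (c : pchains P (m + 1)) (i : Fin (m + 1)) : pchains P m :=
  ⟨c.1 ∘ i.succAbove, c.2.comp (Fin.strictMono_succAbove i)⟩

variable [PartialOrder P] {p : P} {m : ℕ}

/-- The chain `c₀ < ⋯ < c_{m-1} < p`: the join of a chain below `p` with the vertex `p`. -/
def snoc (c : pchains P m) (p : P) (h : ∀ i, c.1 i < p) : pchains P (m + 1) :=
  ⟨Fin.snoc (α := fun _ => P) c.1 p, by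
    intro i j hij
    cases j using Fin.lastCases with
    | last =>
      obtain ⟨i, rfl⟩ := Fin.exists_castSucc_eq.2 hij.ne
      simpa only [Fin.snoc_castSucc, Fin.snoc_last] using h i
    | cast j =>
      obtain ⟨i, rfl⟩ := Fin.exists_castSucc_eq.2 (hij.trans (Fin.castSucc_lt_last j)).ne
      simpa only [Fin.snoc_castSucc] using c.2 (Fin.castSucc_lt_castSucc_iff.1 hij)⟩

theorem snoc_last (c : pchains P m) (h : ∀ i, c.1 i < p) : (c.snoc p h).1 (Fin.last m) = p :=
  Fin.snoc_last (α := fun _ => P) p c.1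

theorem snoc_castSucc (c : pchains P m) (h : ∀ i, c.1 i < p) (i : Fin m) :
    (c.snoc p h).1 i.castSucc = c.1 i :=
  Fin.snoc_castSucc (α := fun _ => P) p c.1 i

theorem snoc_injective {c d : pchains P m} {hc : ∀ i, c.1 i < p} {hd : ∀ i, d.1 i < p}
    (h : c.snoc p hc = d.snoc p hd) : c = d :=
  Subtype.ext (Fin.snoc_injective2 (α := fun _ => P) (congrArg Subtype.val h)).1

theorem face_last_lt (c : pchains P (m + 1)) (i : Fin m) :
    (c.face (Fin.last m)).1 i < c.1 (Fin.last m) := by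
  simpa only [face, Function.comp_apply, Fin.succAbove_last] using c.2 (Fin.castSucc_lt_last i)

theorem snoc_face_last (c : pchains P (m + 1)) :
    (c.face (Fin.last m)).snoc (c.1 (Fin.last m)) c.face_last_lt = c := by
  refine Subtype.ext ?_
  simp only [snoc, face, Fin.succAbove_last]
  exact Fin.snoc_init_self (α := fun _ => P) c.1

theorem face_snoc_last (c : pchains P m) (h : ∀ i, c.1 i < p) :
    (c.snoc p h).face (Fin.last m) = c := by
  refine Subtype.ext ?_
  simp only [snoc, face, Fin.succAbove_last, Fin.snoc_comp_castSucc]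

theorem face_snoc_castSucc (c : pchains P (m + 1)) (h : ∀ i, c.1 i < p) (i : Fin (m + 1)) :
    (c.snoc p h).face i.castSucc = (c.face i).snoc p fun _ => h _ := by
  refine Subtype.ext (funext fun j => ?_)
  cases j using Fin.lastCases <;>
    simp [snoc, face, Fin.castSucc_succAbove_castSucc]

end pchains

theorem simpBdry_single [Preorder P] {m : ℕ} (c : pchains P (m + 1)) (e : M) :
    simpBdry A M P m (Finsupp.single c e) =
      ∑ i : Fin (m + 1), (-1 : A) ^ (i : ℕ) • Finsupp.single (c.face i) e := by
  simp [simpBdry, pchains.face]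

/-- The augmentation of the Roos complex: the sum of the coefficients of a `0`-chain. -/
noncomputable def roosAug (A M P : Type*) [CommRing A] [AddCommGroup M] [Module A M]
    [Preorder P] : (pchains P 1 →₀ M) →ₗ[A] M :=
  Finsupp.lsum ℕ fun _ => LinearMap.id

theorem simpBdry_zero [Preorder P] :
    simpBdry A M P 0 = Finsupp.lsingle default ∘ₗ roosAug A M P := by
  refine Finsupp.lhom_ext fun c e => ?_
  simp [simpBdry_single, roosAug, Subsingleton.elim (c.face 0) default]

section Cone

variable [PartialOrder P] {p : P} {m : ℕ}

open Classical in
/-- The cone operator with apex `p`: joins each chain below `p` with `p`, and kills the chains that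
are not below `p`. -/
noncomputable def cone (A M : Type*) [CommRing A] [AddCommGroup M] [Module A M] (p : P) (m : ℕ) :
    (pchains P m →₀ M) →ₗ[A] (pchains P (m + 1) →₀ M) :=
  Finsupp.lsum ℕ fun c => if h : ∀ i, c.1 i < p then Finsupp.lsingle (c.snoc p h) else 0

theorem cone_single (c : pchains P m) (h : ∀ i, c.1 i < p) (e : M) :
    cone A M p m (Finsupp.single c e) = Finsupp.single (c.snoc p h) e := by
  simp [cone, h]

theorem cone_single_of_not_lt (c : pchains P m) (h : ¬∀ i, c.1 i < p) (e : M) :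
    cone A M p m (Finsupp.single c e) = 0 := by
  simp only [cone, Finsupp.lsum_single, dif_neg h, LinearMap.zero_apply]

theorem cone_apply_snoc (y : pchains P m →₀ M) (d : pchains P m) (h : ∀ i, d.1 i < p) :
    cone A M p m y (d.snoc p h) = y d := by
  classical
  have heq : Finsupp.lapply (d.snoc p h) ∘ₗ cone A M p m = Finsupp.lapply d := by
    refine Finsupp.lhom_ext fun c e => ?_
    by_cases hc : ∀ i, c.1 i < p
    · have hiff : c.snoc p hc = d.snoc p h ↔ c = d :=
        ⟨pchains.snoc_injective, fun hcd => by subst hcd; rfl⟩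
      simp only [LinearMap.comp_apply, cone_single c hc, Finsupp.lapply_apply,
        Finsupp.single_apply, hiff]
    · have hcd : c ≠ d := fun hcd => hc (hcd ▸ h)
      simp only [LinearMap.comp_apply, cone_single_of_not_lt c hc, map_zero, Finsupp.lapply_apply,
        Finsupp.single_eq_of_ne' hcd]
  exact LinearMap.congr_fun heq y

theorem simpBdry_cone_zero (y : pchains P 0 →₀ M) : simpBdry A M P 0 (cone A M p 0 y) = y := by
  have heq : simpBdry A M P 0 ∘ₗ cone A M p 0 = LinearMap.id := by
    refine Finsupp.lhom_ext fun c e => ?_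
    rw [LinearMap.comp_apply, cone_single c fun i => i.elim0, simpBdry_single]
    simp [Subsingleton.elim (pchains.face _ 0) c]
  exact LinearMap.congr_fun heq y

theorem simpBdry_cone_single (c : pchains P (m + 1)) (h : ∀ i, c.1 i < p) (e : M) :
    simpBdry A M P (m + 1) (cone A M p (m + 1) (Finsupp.single c e)) =
      cone A M p m (simpBdry A M P m (Finsupp.single c e)) +
        (-1 : A) ^ (m + 1) • Finsupp.single c e := by
  rw [cone_single c h, simpBdry_single, simpBdry_single, Fin.sum_univ_castSucc,
    pchains.face_snoc_last, map_sum, Fin.val_last]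
  congr 1
  refine Finset.sum_congr rfl fun i _ => ?_
  rw [map_smul, cone_single (c.face i) fun _ => h _, pchains.face_snoc_castSucc, Fin.val_castSucc]

end Cone

end Chains

section Roos

variable {A M P : Type*} [CommRing A] [AddCommGroup M] [Module A M] [PartialOrder P]
  {F : P → Submodule A M} {U V : Set P} {p : P} {m : ℕ}

/-- The `M`-valued chains on `m` vertices lying in `U` whose coefficient at `c₀ < ⋯ < c_{m-1}`
belongs to `F c₀`; for `m = 0` the coefficient of the empty chain is unrestricted. For `m ≥ 1` this
is the degree `m - 1` part of the Roos complex of the restriction of the diagram `F` to `U`. -/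
noncomputable def roosChains (F : P → Submodule A M) (U : Set P) (m : ℕ) :
    Submodule A (pchains P m →₀ M) :=
  Finsupp.submodule (fun c => ⨅ h : 0 < m, F (c.1 ⟨0, h⟩)) ⊓
    Finsupp.supported M A {c | ∀ i, c.1 i ∈ U}

theorem single_mem_roosChains {c : pchains P m} {e : M} (he : ∀ h : 0 < m, e ∈ F (c.1 ⟨0, h⟩))
    (hc : ∀ i, c.1 i ∈ U) : Finsupp.single c e ∈ roosChains F U m := by
  refine ⟨?_, Finsupp.single_mem_supported A e hc⟩
  exact (Finsupp.comap_lsingle_submodule _ c).ge ((Submodule.mem_iInf _).2 he)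

theorem apply_mem_of_mem_roosChains {f : pchains P (m + 1) →₀ M} (hf : f ∈ roosChains F U (m + 1))
    (c : pchains P (m + 1)) : f c ∈ F (c.1 0) :=
  (Submodule.mem_iInf _).1 (hf.1 c) m.succ_pos

theorem vertex_mem_of_apply_ne_zero {f : pchains P m →₀ M} (hf : f ∈ roosChains F U m)
    {c : pchains P m} (hc : f c ≠ 0) (i : Fin m) : c.1 i ∈ U :=
  hf.2 (Finsupp.mem_support_iff.2 hc) i

theorem roosChains_le_iff {N : Submodule A (pchains P m →₀ M)} :
    roosChains F U m ≤ N ↔ ∀ (c : pchains P m) (e : M), (∀ h : 0 < m, e ∈ F (c.1 ⟨0, h⟩)) →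
      (∀ i, c.1 i ∈ U) → Finsupp.single c e ∈ N := by
  refine ⟨fun h c e he hc => h (single_mem_roosChains he hc), fun h f hf => ?_⟩
  rw [← Finsupp.sum_single f]
  exact Submodule.sum_mem _ fun c hc => h c _ ((Submodule.mem_iInf _).1 (hf.1 c)) (hf.2 hc)

theorem roosChains_mono (h : U ⊆ V) : roosChains F U m ≤ roosChains F V m :=
  inf_le_inf_left _ (Finsupp.supported_mono fun _ hc i => h (hc i))

theorem roosChains_empty_succ : roosChains F ∅ (m + 1) = ⊥ :=
  le_bot_iff.1 <| roosChains_le_iff.2 fun _ _ _ hc => (hc 0).elim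

theorem roosChains_le_comap_simpBdry (hF : Monotone F) :
    roosChains F U (m + 1) ≤ (roosChains F U m).comap (simpBdry A M P m) := by
  refine roosChains_le_iff.2 fun c e he hc => ?_
  rw [Submodule.mem_comap, simpBdry_single]
  exact Submodule.sum_mem _ fun i _ => Submodule.smul_mem _ _ <| single_mem_roosChains
    (fun _ => hF (c.2.monotone (Fin.zero_le _)) (he m.succ_pos)) fun _ => hc _

theorem map_roosAug_roosChains : (roosChains F U 1).map (roosAug A M P) = ⨆ q ∈ U, F q := by
  refine le_antisymm ?_ (iSup₂_le fun q hq e he => ?_)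
  · refine Submodule.map_le_iff_le_comap.2 (roosChains_le_iff.2 fun c e he hc => ?_)
    simpa [roosAug] using
      Submodule.mem_iSup_of_mem (c.1 0) (Submodule.mem_iSup_of_mem (hc 0) (he one_pos))
  · let vertex : pchains P 1 := ⟨fun _ => q, Subsingleton.strictMono _⟩
    refine ⟨Finsupp.single vertex e, single_mem_roosChains (fun _ => he) fun _ => hq, ?_⟩
    simp [roosAug]

theorem mem_map_simpBdry_zero_iff {f : pchains P 0 →₀ M} :
    f ∈ (roosChains F U 1).map (simpBdry A M P 0) ↔ f default ∈ ⨆ q ∈ U, F q := by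
  rw [← map_roosAug_roosChains (A := A), simpBdry_zero, Submodule.map_comp]
  refine ⟨?_, fun h => ⟨f default, h, (Finsupp.unique_single f).symm⟩⟩
  rintro ⟨e, he, rfl⟩
  simpa using he

theorem simpBdry_cone_succ {y : pchains P (m + 1) →₀ M}
    (hy : y ∈ roosChains F (Set.Iio p) (m + 1)) :
    simpBdry A M P (m + 1) (cone A M p (m + 1) y) =
      cone A M p m (simpBdry A M P m y) + (-1 : A) ^ (m + 1) • y := by
  have hle : roosChains F (Set.Iio p) (m + 1) ≤
      LinearMap.eqLocus (simpBdry A M P (m + 1) ∘ₗ cone A M p (m + 1))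
        (cone A M p m ∘ₗ simpBdry A M P m + (-1 : A) ^ (m + 1) • LinearMap.id) :=
    roosChains_le_iff.2 fun c e _ hc => simpBdry_cone_single c hc e
  exact hle hy

theorem cone_mem_roosChains (hU : IsLowerSet U) (hp : p ∈ U) {y : pchains P (m + 1) →₀ M}
    (hy : y ∈ roosChains F (Set.Iio p) (m + 1)) :
    cone A M p (m + 1) y ∈ roosChains F U (m + 2) := by
  have hle : roosChains F (Set.Iio p) (m + 1) ≤
      (roosChains F U (m + 2)).comap (cone A M p (m + 1)) := by
    refine roosChains_le_iff.2 fun c e he hc => ?_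
    rw [Submodule.mem_comap, cone_single c hc]
    refine single_mem_roosChains (fun _ => ?_) fun i => ?_
    · exact (c.snoc_castSucc hc 0).symm ▸ he m.succ_pos
    · cases i using Fin.lastCases with
      | last => exact (c.snoc_last hc).symm ▸ hp
      | cast i => exact (c.snoc_castSucc hc i).symm ▸ hU (le_of_lt (hc i)) hp
  exact hle hy

theorem apply_mem_of_cone_mem_roosChains {y : pchains P 0 →₀ M}
    (h : cone A M p 0 y ∈ roosChains F U 1) : y default ∈ F p := by
  have hcoeff := apply_mem_of_mem_roosChains h (pchains.snoc default p fun i => i.elim0)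
  rwa [cone_apply_snoc, ← Fin.last_zero, pchains.snoc_last] at hcoeff

theorem roosChains_le_sup_map_cone (hp : Maximal (· ∈ U) p) :
    roosChains F U (m + 1) ≤ roosChains F (U \ {p}) (m + 1) ⊔
      (roosChains F (Set.Iio p) m).map (cone A M p m) := by
  refine roosChains_le_iff.2 fun c e he hc => ?_
  by_cases hlast : c.1 (Fin.last m) = p
  · subst hlast
    refine Submodule.mem_sup_right ⟨Finsupp.single (c.face (Fin.last m)) e, ?_, ?_⟩
    · refine single_mem_roosChains (fun h => ?_) c.face_last_lt
      obtain ⟨m, rfl⟩ := Nat.exists_eq_succ_of_ne_zero h.ne'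
      exact he (Nat.succ_pos _)
    · rw [cone_single _ c.face_last_lt, pchains.snoc_face_last]
  · refine Submodule.mem_sup_left (single_mem_roosChains he fun i => ⟨hc i, fun hi => hlast ?_⟩)
    have hle : p ≤ c.1 (Fin.last m) := (Set.mem_singleton_iff.1 hi).ge.trans
      (c.2.monotone (Fin.le_last i))
    exact (hp.eq_of_le (hc _) hle).symm

theorem eq_zero_of_add_cone_eq_zero (hp : p ∉ U) {z : pchains P (m + 1) →₀ M}
    (hz : z ∈ roosChains F U (m + 1)) {y : pchains P m →₀ M}
    (hy : y ∈ roosChains F (Set.Iio p) m) (h : z + cone A M p m y = 0) : y = 0 := by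
  ext d
  by_contra hd
  have hlt : ∀ i, d.1 i < p := vertex_mem_of_apply_ne_zero hy hd
  have hzd : z (d.snoc p hlt) = 0 := by
    by_contra hne
    exact hp (d.snoc_last hlt ▸ vertex_mem_of_apply_ne_zero hz hne (Fin.last m))
  have hsum := DFunLike.congr_fun h (d.snoc p hlt)
  rw [Finsupp.add_apply, cone_apply_snoc, hzd, zero_add] at hsum
  exact hd hsum

/- The part of `∂(a + cone y)` that involves `p` is `cone (∂y)`, up to a summand `± y` without `p`;
so if `a + cone y` is a cycle, then so is `y`, and what remains of `∂(a + cone y)` is `∂a ± y`. -/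
theorem cycle_of_add_cone_cycle (hF : Monotone F) (hp : p ∉ U) (hIio : Set.Iio p ⊆ U)
    {a : pchains P (m + 1) →₀ M} (ha : a ∈ roosChains F U (m + 1)) {y : pchains P m →₀ M}
    (hy : y ∈ roosChains F (Set.Iio p) m) (hcycle : simpBdry A M P m (a + cone A M p m y) = 0) :
    y ∈ simpCycles A M P m ∧ simpBdry A M P m a + (-1 : A) ^ m • y = 0 := by
  rw [map_add] at hcycle
  cases m with
  | zero =>
    rw [simpBdry_cone_zero] at hcycle
    exact ⟨Submodule.mem_top, by rwa [pow_zero, one_smul]⟩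
  | succ m =>
    rw [simpBdry_cone_succ hy, add_left_comm, add_comm (cone A M p m _)] at hcycle
    have hrest : simpBdry A M P (m + 1) a + (-1 : A) ^ (m + 1) • y ∈ roosChains F U (m + 1) :=
      add_mem (roosChains_le_comap_simpBdry hF ha)
        (Submodule.smul_mem _ _ (roosChains_mono hIio hy))
    have hbdry : simpBdry A M P m y = 0 :=
      eq_zero_of_add_cone_eq_zero hp hrest (roosChains_le_comap_simpBdry hF hy) hcycle
    rw [hbdry, map_zero, add_zero] at hcycle
    exact ⟨hbdry, hcycle⟩

/- Induction on the lower set `U`, removing a maximal element `p`. A cycle on `U` is `a + cone y`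
with `a` on `U \ {p}` and `y` a cycle on `Iio p`. If `y = ∂w`, then subtracting `± ∂ (cone w)`
leaves a cycle on `U \ {p}`. The hypothesis `hsep` is what makes `y` a boundary when it lives on the
empty chain. -/
theorem roosChains_inf_ker_le_map_simpBdry [Finite P] (hF : Monotone F)
    (hsep : ∀ (p : P) (U : Set P), IsLowerSet U → p ∉ U →
      F p ⊓ ⨆ q ∈ U, F q ≤ ⨆ q ∈ Set.Iio p, F q) (hU : IsLowerSet U) (m : ℕ) :
    roosChains F U (m + 1) ⊓ LinearMap.ker (simpBdry A M P m) ≤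
      (roosChains F U (m + 2)).map (simpBdry A M P (m + 1)) := by
  induction U using WellFoundedLT.induction generalizing m with
  | ind U ih =>
  rcases U.eq_empty_or_nonempty with rfl | hne
  · rw [roosChains_empty_succ, bot_inf_eq]
    exact bot_le
  obtain ⟨p, hp⟩ := U.toFinite.exists_maximal hne
  have hlower : IsLowerSet (U \ {p}) :=
    hU.sdiff fun b hb c hc hbc => (hp.eq_of_le hb (hc ▸ hbc)).symm
  have hIio : Set.Iio p ⊆ U \ {p} := fun q hq => ⟨hU hq.le hp.prop, hq.ne⟩
  have hp_notMem : p ∉ U \ {p} := fun h => h.2 rfl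
  have hssubset : U \ {p} < U := Set.sdiff_singleton_ssubset.2 hp.prop
  rintro f ⟨hf, hcycle⟩
  obtain ⟨a, ha, _, ⟨y, hy, rfl⟩, rfl⟩ := Submodule.mem_sup.1 (roosChains_le_sup_map_cone hp hf)
  obtain ⟨hy_cycle, hay⟩ := cycle_of_add_cone_cycle hF hp_notMem hIio ha hy hcycle
  have hy_bdry : y ∈ (roosChains F (Set.Iio p) (m + 1)).map (simpBdry A M P m) := by
    cases m with
    | zero =>
      have hcone : cone A M p 0 y ∈ roosChains F U 1 := by
        simpa only [add_sub_cancel_left] using sub_mem hf (roosChains_mono Set.sdiff_subset ha)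
      have hy_sum : y ∈ (roosChains F (U \ {p}) 1).map (simpBdry A M P 0) :=
        ⟨-a, neg_mem ha, by rw [map_neg, neg_eq_iff_add_eq_zero, ← hay, pow_zero, one_smul]⟩
      exact mem_map_simpBdry_zero_iff.2 <| hsep p _ hlower hp_notMem
        ⟨apply_mem_of_cone_mem_roosChains hcone, mem_map_simpBdry_zero_iff.1 hy_sum⟩
    | succ m => exact ih _ (hIio.trans_lt hssubset) (isLowerSet_Iio p) m ⟨hy, hy_cycle⟩
  obtain ⟨w, hw, rfl⟩ := hy_bdry
  obtain ⟨g, hg, hg_bdry⟩ := ih _ hssubset hlower m (x := a + (-1 : A) ^ m • w)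
    ⟨add_mem ha (Submodule.smul_mem _ _ (roosChains_mono hIio hw)), LinearMap.mem_ker.2 <| by
      rw [map_add, map_smul, hay]⟩
  refine ⟨g + cone A M p (m + 1) w, add_mem (roosChains_mono Set.sdiff_subset hg)
    (cone_mem_roosChains hU hp.prop hw), ?_⟩
  rw [map_add, hg_bdry, simpBdry_cone_succ hw, pow_succ]
  module

end Roos

theorem roosGamma_eq_roosChains {n : ℕ} {k : Type} [Field k] {P : Type} [PartialOrder P]
    (ι : P → Ideal (MvPolynomial (Fin n) k)) (E : Type) [AddCommGroup E]
    [Module (MvPolynomial (Fin n) k) E] (m : ℕ) :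
    roosGamma k ι E m = roosChains (fun p => gammaTorsion (ι p) E) Set.univ (m + 1) := by
  ext f
  simp [roosGamma, roosChains]

theorem stmt_10_general {R P E : Type*} [CommRing R] [IsNoetherianRing R] [PartialOrder P]
    [Finite P] [AddCommGroup E] [Module R E] (ι : P → Ideal R)
    (horder : ∀ p q, p ≤ q ↔ ι q ≤ ι p)
    (hclosed : ∀ p q, ι p ⊔ ι q ≠ ⊤ → ∃ r, ι r = ι p ⊔ ι q)
    (I : Ideal R) (hI : I.radical = (⨅ p, ι p).radical) (hE : Module.Baer R E) :
    let roos (m : ℕ) := roosChains (fun p => gammaTorsion (ι p) E) Set.univ (m + 1)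
    (∀ m, roos (m + 1) ≤ (roos m).comap (simpBdry R E P (m + 1))) ∧
    (roos 0).map (roosAug R E P) = gammaTorsion I E ∧
    roos 0 ⊓ LinearMap.ker (roosAug R E P) ≤ (roos 1).map (simpBdry R E P 1) ∧
    ∀ m, roos (m + 1) ⊓ LinearMap.ker (simpBdry R E P (m + 1)) ≤
      (roos (m + 2)).map (simpBdry R E P (m + 2)) := by
  intro roos
  have hmono : Monotone fun p => gammaTorsion (ι p) E :=
    fun p q hpq => gammaTorsion_antitone ((horder p q).1 hpq)
  have hexact := roosChains_inf_ker_le_map_simpBdry hmono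
    (fun _ _ => gammaTorsion_inf_iSup_le_iSup_Iio hE horder hclosed) isLowerSet_univ
  have hker : LinearMap.ker (roosAug R E P) ≤ LinearMap.ker (simpBdry R E P 0) := by
    rw [simpBdry_zero]
    exact LinearMap.ker_le_ker_comp _ _
  refine ⟨fun _ => roosChains_le_comap_simpBdry hmono, ?_,
    (inf_le_inf_left _ hker).trans (hexact 0), fun m => hexact (m + 1)⟩
  rw [map_roosAug_roosChains, iSup_univ, gammaTorsion_eq_iSup_of_radical_eq hE hI]

/-- Let `X ⊆ 𝔸ⁿ_k` be an arrangement of linear subvarieties defined by an ideal `I`, with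
intersection poset `P` (elements correspond to the intersections of irreducible components,
ordered by inclusion of subspaces, i.e. reverse inclusion of the radical ideals `I_p`).
For every injective `R`-module `E` the augmented Roos complex
`Roos_*(H⁰_{[*]}(E)) → H⁰_I(E) → 0` is exact. -/
theorem stmt_10 (n : ℕ) (k : Type) [Field k]
    (P : Type) [PartialOrder P] [Fintype P]
    (ι : P → Ideal (MvPolynomial (Fin n) k))
    -- the poset is ordered by inclusion of the corresponding linear subvarieties
    (horder : ∀ p q : P, p ≤ q ↔ ι q ≤ ι p)
    -- each `I_p` is the (prime, radical) defining ideal of a linear subvariety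
    (hlin : ∀ p : P, (ι p).IsPrime ∧
      ∃ S : Set (MvPolynomial (Fin n) k),
        (∀ f ∈ S, f.totalDegree ≤ 1) ∧ ι p = Ideal.span S)
    -- `P` is closed under (nonempty, proper) intersections, i.e. sums of the ideals
    (hclosed : ∀ T : Finset P, T.Nonempty → (T.sup fun p => ι p) ≠ ⊤ →
      ∃ q : P, ι q = T.sup fun p => ι p)
    -- every element of `P` is the intersection of the irreducible components containing it
    (hcomp : ∀ p : P, ι p = sSup {J | ∃ m : P, IsMax m ∧ p ≤ m ∧ J = ι m})
    -- `I` is an ideal defining the arrangement `X = ⋃ₚ Xₚ`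
    (I : Ideal (MvPolynomial (Fin n) k)) (hI : I.radical = ⨅ p : P, ι p)
    -- `E` is an injective `R`-module
    (E : Type) [AddCommGroup E] [Module (MvPolynomial (Fin n) k) E]
    (hE : Module.Injective (MvPolynomial (Fin n) k) E) :
    -- the Roos differential restricts to the Roos subcomplex
    (∀ m : ℕ, ∀ f ∈ roosGamma k ι E (m + 1),
        simpBdry (MvPolynomial (Fin n) k) E P (m + 1) f ∈ roosGamma k ι E m) ∧
    -- the augmentation `Roos₀ → H⁰_I(E)` is well defined and surjective
    (∀ f ∈ roosGamma k ι E 0,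
        gammaAug n k P E f ∈ gammaTorsion I E) ∧
    (∀ e ∈ gammaTorsion I E, ∃ f ∈ roosGamma k ι E 0,
        gammaAug n k P E f = e) ∧
    -- exactness at degree `0` of the augmented complex
    (∀ f ∈ roosGamma k ι E 0,
        gammaAug n k P E f = (0 : E) →
        ∃ g ∈ roosGamma k ι E 1, simpBdry (MvPolynomial (Fin n) k) E P 1 g = f) ∧
    -- exactness in higher degrees
    (∀ m : ℕ, ∀ f ∈ roosGamma k ι E (m + 1),
        simpBdry (MvPolynomial (Fin n) k) E P (m + 1) f = 0 →
        ∃ g ∈ roosGamma k ι E (m + 2),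
          simpBdry (MvPolynomial (Fin n) k) E P (m + 2) g = f) := by
  classical
  simp only [roosGamma_eq_roosChains]
  obtain ⟨hbdry, haug, hexact₀, hexact⟩ := stmt_10_general ι horder
    (fun p q h => by simpa using hclosed {p, q} (by simp) (by simpa using h)) I
    (by rw [← hI, Ideal.radical_idem]) (Module.Baer.of_injective hE)
  exact ⟨hbdry, fun f hf => haug.le ⟨f, hf, rfl⟩, fun e he => haug.ge he,
    fun f hf h => hexact₀ ⟨hf, h⟩, fun m f hf h => hexact m ⟨hf, h⟩⟩
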